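/- Let n ≥ 3. On the dynamic ring ZMod n, robots A and B start at the same node v₀, with A attempting to move clockwise in every round and B attempting to move counterclockwise in every round. A third robot C starts at an arbitrary node and in every round attempts to move in a direction given by an arbitrary function d_C : ℕ → Bool (C never voluntarily stays put, but its direction may change arbitrarily from round to round). Then for every adversary e : ℕ → Option (ZMod n), robot C meets robot A or robot C meets robot B within n rounds (they occupy the same node at some time t ≤ n, or cross the same edge in opposite directions in some round t with t + 1 ≤ n). -/

import Mathlib

/-!
Lift all trajectories to `ℤ`, the universal cover of the ring, so that `A` starts at `x`, `B` at
`x + n`, and `C` strictly between them. As long as `C` meets neither robot, it stays strictly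
between the two lifts, so their distance is at least `2`. Hence the edge ahead of `A` differs from
the edge ahead of `B`, the adversary can block only one of them, and the distance shrinks in every
round. It starts at `n`, so this cannot go on for `n - 1` rounds.
-/

/-- One round of movement on the dynamic ring `ZMod n`: a robot at node `p` attempting to
move clockwise (`dir = true`) moves to `p + 1` unless the adversary removed edge `p`;
attempting counterclockwise (`dir = false`) it moves to `p - 1` unless edge `p - 1` was
removed. -/
def ringStep (n : ℕ) (e : Option (ZMod n)) (dir : Bool) (p : ZMod n) : ZMod n :=
  if dir then (if e ≠ some p then p + 1 else p)
  else (if e ≠ some (p - 1) then p - 1 else p)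

/-- Position of a robot with start node `v`, per-round attempted directions `d` and
adversary `e`. -/
def ringPos (n : ℕ) (e : ℕ → Option (ZMod n)) (d : ℕ → Bool) (v : ZMod n) : ℕ → ZMod n
  | 0 => v
  | t + 1 => ringStep n (e t) (d t) (ringPos n e d v t)

/-- Two robots with position functions `p q` meet within `R` rounds: same node at some
time `t ≤ R`, or they cross the same edge in opposite directions in a round completed by
time `R`. -/
def meetsWithin (n R : ℕ) (p q : ℕ → ZMod n) : Prop :=
  (∃ t ≤ R, p t = q t) ∨
  (∃ t, t + 1 ≤ R ∧ p (t + 1) = q t ∧ q (t + 1) = p t ∧ p t ≠ q t)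

section Ring

variable {n : ℕ}

theorem meetsWithin.mono {R S : ℕ} {p q : ℕ → ZMod n} (h : meetsWithin n R p q) (hRS : R ≤ S) :
    meetsWithin n S p q :=
  h.imp (fun ⟨t, ht, h⟩ ↦ ⟨t, ht.trans hRS, h⟩) (fun ⟨t, ht, h⟩ ↦ ⟨t, ht.trans hRS, h⟩)

theorem meetsWithin.symm {R : ℕ} {p q : ℕ → ZMod n} (h : meetsWithin n R p q) :
    meetsWithin n R q p :=
  h.imp (fun ⟨t, ht, h⟩ ↦ ⟨t, ht, h.symm⟩)
    (fun ⟨t, ht, hp, hq, hne⟩ ↦ ⟨t, ht, hq, hp, hne.symm⟩)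

/-- A walk on the ring: in each round it crosses one edge or stays put, regardless of which edge
the adversary removes. The displacement `s` is an integer so that it can be bounded and lifted. -/
def IsWalk (p : ℕ → ZMod n) : Prop :=
  ∀ t, ∃ s : ℤ, |s| ≤ 1 ∧ p (t + 1) = p t + s

/-- `P` is a lift of the trajectory `p` along the covering map `ℤ → ZMod n` that moves by at most
one per round. -/
structure IsLift (P : ℕ → ℤ) (p : ℕ → ZMod n) : Prop where
  cast_eq : ∀ t, (P t : ZMod n) = p t
  abs_sub_le_one : ∀ t, |P (t + 1) - P t| ≤ 1

theorem IsWalk.exists_isLift {p : ℕ → ZMod n} (hp : IsWalk p) {x : ℤ} (hx : x = p 0) :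
    ∃ P : ℕ → ℤ, P 0 = x ∧ IsLift P p := by
  choose s hs hps using hp
  refine ⟨fun t ↦ x + ∑ i ∈ Finset.range t, s i, by simp, fun t ↦ ?_, fun t ↦ ?_⟩
  · induction t with
    | zero => simpa using hx
    | succ t ih =>
      rw [hps, ← ih, Finset.sum_range_succ]
      push_cast
      ring
  · simpa [Finset.sum_range_succ] using hs t

theorem IsLift.lt_of_not_meetsWithin {P Q : ℕ → ℤ} {p q : ℕ → ZMod n} {R : ℕ}
    (hP : IsLift P p) (hQ : IsLift Q q) (h₀ : P 0 < Q 0) (h : ¬meetsWithin n R p q)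
    {t : ℕ} (ht : t ≤ R) : P t < Q t := by
  have not_meet {t : ℕ} (ht : t ≤ R) : p t ≠ q t := fun hpq ↦ h (.inl ⟨t, ht, hpq⟩)
  induction t with
  | zero => exact h₀
  | succ t ih =>
    have hlt := ih (by lia)
    have hPstep := (abs_le.mp (hP.abs_sub_le_one t)).2
    have hQstep := (abs_le.mp (hQ.abs_sub_le_one t)).1
    have hcases : P (t + 1) < Q (t + 1) ∨ P (t + 1) = Q (t + 1) ∨
        (P (t + 1) = Q t ∧ Q (t + 1) = P t) := by lia
    rcases hcases with hlt' | heq | ⟨hPQ, hQP⟩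
    · exact hlt'
    · exact absurd (by rw [← hP.cast_eq, ← hQ.cast_eq, heq]) (not_meet ht)
    · refine absurd (.inr ⟨t, ht, ?_, ?_, not_meet (by lia)⟩) h
      · rw [← hP.cast_eq, ← hQ.cast_eq, hPQ]
      · rw [← hP.cast_eq, ← hQ.cast_eq, hQP]

/-- The signed number of edges, counted clockwise, that a robot at `p` attempting to move in
direction `dir` crosses in a round in which `e` is removed. -/
def ringDisplacement (e : Option (ZMod n)) (dir : Bool) (p : ZMod n) : ℤ :=
  if dir then (if e = some p then 0 else 1) else (if e = some (p - 1) then 0 else -1)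

theorem ringStep_eq_add_ringDisplacement (e : Option (ZMod n)) (dir : Bool) (p : ZMod n) :
    ringStep n e dir p = p + ringDisplacement e dir p := by
  unfold ringStep ringDisplacement
  split_ifs <;> simp_all [sub_eq_add_neg]

theorem abs_ringDisplacement_le_one (e : Option (ZMod n)) (dir : Bool) (p : ZMod n) :
    |ringDisplacement e dir p| ≤ 1 := by
  unfold ringDisplacement
  split_ifs <;> simp

theorem one_le_ringDisplacement_true_sub_false (e : Option (ZMod n)) {p q : ZMod n}
    (hpq : p + 1 ≠ q) : 1 ≤ ringDisplacement e true p - ringDisplacement e false q := by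
  have not_both_blocked : ¬(e = some p ∧ e = some (q - 1)) := by
    rintro ⟨rfl, hq⟩
    exact hpq (eq_sub_iff_add_eq.mp (Option.some.inj hq))
  unfold ringDisplacement
  split_ifs <;> simp_all

theorem isWalk_ringPos (e : ℕ → Option (ZMod n)) (d : ℕ → Bool) (v : ZMod n) :
    IsWalk (ringPos n e d v) := fun t ↦
  ⟨_, abs_ringDisplacement_le_one (e t) (d t) _, ringStep_eq_add_ringDisplacement (e t) (d t) _⟩

/-- The lift to `ℤ` starting at `x` of the trajectory `ringPos n e d x` of a robot. -/
def ringLift (e : ℕ → Option (ZMod n)) (d : ℕ → Bool) (x : ℤ) : ℕ → ℤ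
  | 0 => x
  | t + 1 => ringLift e d x t + ringDisplacement (e t) (d t) (ringLift e d x t)

theorem isLift_ringLift (e : ℕ → Option (ZMod n)) (d : ℕ → Bool) (x : ℤ) :
    IsLift (ringLift e d x) (ringPos n e d x) where
  cast_eq t := by
    induction t with
    | zero => rfl
    | succ t ih => simp [ringLift, ringPos, ringStep_eq_add_ringDisplacement, ih]
  abs_sub_le_one t := by
    simpa [ringLift] using abs_ringDisplacement_le_one (e t) (d t) _

theorem intCast_add_one_ne_intCast {x y : ℤ} (hxy : x + 1 < y) (hyx : y ≤ x + n) :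
    (x + 1 : ZMod n) ≠ y := by
  intro h
  have hdvd : (n : ℤ) ∣ y - (x + 1) :=
    (ZMod.intCast_eq_intCast_iff_dvd_sub _ _ n).mp (by exact_mod_cast h)
  have := Int.le_of_dvd (by lia) hdvd
  lia

theorem ringLift_false_sub_ringLift_true_le (e : ℕ → Option (ZMod n)) {x y : ℤ}
    (hyx : y ≤ x + n) {T : ℕ}
    (hgap : ∀ t < T, ringLift e (fun _ ↦ true) x t + 1 < ringLift e (fun _ ↦ false) y t) :
    ringLift e (fun _ ↦ false) y T - ringLift e (fun _ ↦ true) x T ≤ y - x - T := by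
  induction T with
  | zero => simp [ringLift]
  | succ T ih =>
    have hle := ih fun t ht ↦ hgap t (by lia)
    have hshrink := one_le_ringDisplacement_true_sub_false (e T)
      (intCast_add_one_ne_intCast (n := n) (hgap T (by lia)) (by lia))
    simp only [ringLift]
    lia

theorem IsWalk.meetsWithin_ringPos_of_between {c : ℕ → ZMod n} (hc : IsWalk c)
    (e : ℕ → Option (ZMod n)) {x y z : ℤ} (hxz : x < z) (hzy : z < y) (hyx : y ≤ x + n)
    (hz : z = c 0) {R : ℕ} (hR : y - x ≤ R + 1) :
    meetsWithin n R c (ringPos n e (fun _ ↦ true) x) ∨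
      meetsWithin n R c (ringPos n e (fun _ ↦ false) y) := by
  by_contra! ⟨hA, hB⟩
  obtain ⟨C, rfl, hC⟩ := hc.exists_isLift hz
  have hAC {t : ℕ} (ht : t ≤ R) : ringLift e (fun _ ↦ true) x t < C t :=
    (isLift_ringLift e _ x).lt_of_not_meetsWithin hC hxz (fun h ↦ hA h.symm) ht
  have hCB {t : ℕ} (ht : t ≤ R) : C t < ringLift e (fun _ ↦ false) y t :=
    hC.lt_of_not_meetsWithin (isLift_ringLift e _ y) hzy hB ht
  have hdist := ringLift_false_sub_ringLift_true_le e hyx (T := R) fun t ht ↦ by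
    have := hAC ht.le
    have := hCB ht.le
    lia
  have := hAC le_rfl
  have := hCB le_rfl
  lia

theorem third_robot_meets_A_or_B_general [NeZero n] (v₀ : ZMod n) (e : ℕ → Option (ZMod n))
    {c : ℕ → ZMod n} (hc : IsWalk c) :
    meetsWithin n (n - 1) c (ringPos n e (fun _ ↦ true) v₀) ∨
      meetsWithin n (n - 1) c (ringPos n e (fun _ ↦ false) v₀) := by
  by_cases h₀ : c 0 = v₀
  · exact .inl (.inl ⟨0, Nat.zero_le _, h₀⟩)
  obtain ⟨x, rfl⟩ := ZMod.intCast_surjective v₀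
  have hpos : 0 < (c 0 - x).val := ZMod.val_pos.mpr (sub_ne_zero.mpr h₀)
  have hlt : (c 0 - x).val < n := ZMod.val_lt _
  have hmeet := hc.meetsWithin_ringPos_of_between e (x := x) (y := x + n)
    (z := x + (c 0 - x).val) (R := n - 1) (by lia) (by lia) le_rfl (by simp) (by lia)
  simpa using hmeet

end Ring

/-- Lemma 5 / Lemma 7 core claim: robots `A` and `B` start at the same node `v₀` and move
in fixed opposite directions (A clockwise, B counterclockwise) in every round, while a
third robot `C` starts anywhere and attempts to move in every round in an arbitrary
(possibly changing) direction `dC`. Then for every adversary, `C` meets `A` or `C` meets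
`B` within `n` rounds. -/
theorem third_robot_meets_A_or_B (n : ℕ) (hn : 3 ≤ n)
    (v₀ vC : ZMod n) (dC : ℕ → Bool) (e : ℕ → Option (ZMod n)) :
    meetsWithin n n (ringPos n e dC vC) (ringPos n e (fun _ => true) v₀) ∨
    meetsWithin n n (ringPos n e dC vC) (ringPos n e (fun _ => false) v₀) := by
  have : NeZero n := ⟨by lia⟩
  exact (third_robot_meets_A_or_B_general v₀ e (isWalk_ringPos e dC vC)).imp
    (.mono · (n.sub_le 1)) (.mono · (n.sub_le 1))
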